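/- Truncation error for Gaussian weights: for every R > 0 there exists a constant C_R, depending only on R, such that for all 0 < h ≤ 1 the following holds: if W is a real centered Gaussian random variable of variance h and H := (−R/h) ∨ (W/h) ∧ (R/h), then 𝔼[(W/h − H)²] ≤ C_R h. -/

import Mathlib

open MeasureTheory ProbabilityTheory
open scoped NNReal

lemma trunc_pointwise (R h w : ℝ) (hR : 0 < R) (hh : 0 < h) :
    (w / h - max (-(R / h)) (min (w / h) (R / h))) ^ 2 ≤ w ^ 6 * (1 / (R ^ 4 * h ^ 2)) := by
  have key : ∀ a b : ℝ, 0 < b → (a - max (-b) (min a b)) ^ 2 ≤ a ^ 6 / b ^ 4 := by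
    intro a b hb
    rw [le_div_iff₀ (by positivity)]
    have main : b ^ 2 ≤ a ^ 2 → (a - max (-b) (min a b)) ^ 2 ≤ a ^ 2 →
        (a - max (-b) (min a b)) ^ 2 * b ^ 4 ≤ a ^ 6 := by
      intro h1 h2
      have h3 : b ^ 4 ≤ a ^ 4 := by nlinarith [sq_nonneg a, sq_nonneg b]
      calc _ ≤ a ^ 2 * a ^ 4 := mul_le_mul h2 h3 (by positivity) (by positivity)
        _ = a ^ 6 := by ring
    rcases le_total a (-b) with h1 | h1
    · apply main
      · nlinarith
      · rw [min_eq_left (by linarith), max_eq_left h1]; nlinarith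
    · rcases le_total a b with h2 | h2
      · rw [min_eq_left h2, max_eq_right h1]
        simp only [sub_self]
        have h6 : 0 ≤ a ^ 6 := by positivity
        linarith
      · apply main
        · nlinarith
        · rw [min_eq_right h2, max_eq_right (by linarith)]; nlinarith
  refine (key (w / h) (R / h) (by positivity)).trans (le_of_eq ?_)
  field_simp

/-- **Truncation error for Gaussian weights.**
For every `R > 0` there exists a constant `C_R`, depending only on `R`, such that for
all `0 < h ≤ 1` the following holds: if `W` is a real centered Gaussian random variable
of variance `h` and `H := (-R/h) ∨ (W/h) ∧ (R/h)`, then `𝔼[(W/h - H)²] ≤ C_R h`. -/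
theorem gaussian_truncation_error (R : ℝ) (hR : 0 < R) :
    ∃ C : ℝ, 0 < C ∧
      ∀ (h : ℝ≥0), 0 < h → (h : ℝ) ≤ 1 →
      ∀ (Ω : Type) [MeasurableSpace Ω] (μ : Measure Ω), IsProbabilityMeasure μ →
      ∀ (W : Ω → ℝ), Measurable W → μ.map W = gaussianReal 0 h →
        ∫ ω, (W ω / (h : ℝ)
            - max (-(R / (h : ℝ))) (min (W ω / (h : ℝ)) (R / (h : ℝ)))) ^ 2 ∂μ
          ≤ C * (h : ℝ) := by
  have hM : 0 ≤ ∫ x, x ^ 6 ∂(gaussianReal 0 1) :=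
    integral_nonneg fun x => by positivity
  refine ⟨(∫ x, x ^ 6 ∂(gaussianReal 0 1)) / R ^ 4 + 1, by positivity, ?_⟩
  intro h hh _ Ω _ μ _ W hW hlaw
  have hh' : (0 : ℝ) < h := hh
  have hint : Integrable (fun x : ℝ => x ^ 6) (gaussianReal 0 h) := by
    have := (memLp_id_gaussianReal (μ := 0) (v := h) 6).integrable_norm_pow (by norm_num)
    refine this.congr (ae_of_all _ fun x => ?_)
    simp [Even.pow_abs (show Even 6 by decide)]
  have hmap : gaussianReal 0 h = (gaussianReal 0 1).map (fun x => Real.sqrt h * x) := by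
    rw [gaussianReal_map_const_mul]
    congr 1
    · simp
    · ext; simp
  have hmom : ∫ x, x ^ 6 ∂(gaussianReal 0 h) = h ^ 3 * ∫ x, x ^ 6 ∂(gaussianReal 0 1) := by
    rw [hmap, integral_map (by fun_prop) (by fun_prop), ← integral_const_mul]
    congr 1
    ext x
    have : Real.sqrt h ^ 6 = (h : ℝ) ^ 3 := by
      rw [show (6 : ℕ) = 2 * 3 by norm_num, pow_mul, Real.sq_sqrt hh'.le]
    rw [mul_pow, this]
  have hmom2 : ∫ ω, W ω ^ 6 ∂μ = h ^ 3 * ∫ x, x ^ 6 ∂(gaussianReal 0 1) := by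
    rw [← hmom, ← hlaw, integral_map hW.aemeasurable (by fun_prop)]
  have hintW : Integrable (fun ω => W ω ^ 6) μ := by
    rw [← hlaw] at hint
    exact hint.comp_measurable hW
  calc _ ≤ ∫ ω, W ω ^ 6 * (1 / (R ^ 4 * (h : ℝ) ^ 2)) ∂μ :=
        integral_mono_of_nonneg (ae_of_all _ fun ω => by positivity) (hintW.mul_const _)
          (ae_of_all _ fun ω => trunc_pointwise R h (W ω) hR hh')
    _ = (∫ x, x ^ 6 ∂(gaussianReal 0 1)) / R ^ 4 * h := by
        rw [integral_mul_const, hmom2]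
        field_simp
    _ ≤ _ := by nlinarith
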